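/- arXiv:1507.05103 — 2 statements merged into one kernel-verified Lean document; each statement's English description precedes it below -/
import Mathlib

section
/- Let k > 1 and let x = αx′ and y = αy′ be two vertices of the hierarchical graph H_{n,k} having the same first coordinate α ∈ Z_n, where x′, y′ ∈ Z_n^{k−1} are their tails. Then the graph distance between x and y in H_{n,k} equals the graph distance between x′ and y′ in H_{n,k−1}. -/
/-!
The block `{α} × Z_n^m` is a retract of `H_{n,m+1}`. The inclusion `x ↦ αx` is a graph embedding
of `H_{n,m}` (`hierRel_cons_same`). The edges of `H_{n,m+1}` between different blocks are only
`0⋯0 ~ b y` with `b ≠ 0` and `y` peripheral, and `a 0⋯0 ~ b 0⋯0` with `a, b ≠ 0`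
(`hierRel_cons_ne`). Consequently there is a map back to `H_{n,m}` which sends every edge to an edge
or to a single vertex, and which undoes the inclusion (`hierFold_adj`):

* if `α = 0`, keep the tail in block `0` and collapse all the other blocks to the root;
* if `α ≠ 0`, collapse block `0` to the root and keep the tail in all the other blocks; an edge
  `0⋯0 ~ b y` becomes the edge from the root to the peripheral vertex `y`.

Such maps do not increase distances in either direction, and they preserve reachability, so the
distances agree.
-/

/-- Rule (1): the two vertices agree on the first `k-1` coordinates and differ
(hence differ in the last coordinate). -/
def rule1 {n k : ℕ} (x y : Fin k → ZMod n) : Prop :=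
  x ≠ y ∧ ∀ j : Fin k, (j : ℕ) + 1 < k → x j = y j

/-- Rule (2): `x = x_1…x_i 0…0` and `y = x_1…x_i x_{i+1}…x_k` with `x_j ≠ 0` for
`i+1 ≤ j ≤ k`, where `0 ≤ i ≤ k-2` (`i` is the length of the shared prefix,
0-indexed coordinates `≥ i` are zero on the `x` side and nonzero on the `y` side). -/
def rule2 {n k : ℕ} (x y : Fin k → ZMod n) : Prop :=
  ∃ i : ℕ, i + 2 ≤ k ∧ (∀ j : Fin k, (j : ℕ) < i → x j = y j) ∧
    (∀ j : Fin k, i ≤ (j : ℕ) → x j = 0) ∧ (∀ j : Fin k, i ≤ (j : ℕ) → y j ≠ 0)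

/-- Rule (3): `x = x_1…x_{i-1} x_i 0…0` and `y = x_1…x_{i-1} y_i 0…0` with
`x_i, y_i ≠ 0`, `x_i ≠ y_i` and `1 ≤ i ≤ k-1` (here `p` is the 0-indexed
position `i-1`, so `p ≤ k-2`). -/
def rule3 {n k : ℕ} (x y : Fin k → ZMod n) : Prop :=
  ∃ p : Fin k, (p : ℕ) + 2 ≤ k ∧ (∀ j : Fin k, j < p → x j = y j) ∧
    x p ≠ 0 ∧ y p ≠ 0 ∧ x p ≠ y p ∧ (∀ j : Fin k, p < j → x j = 0 ∧ y j = 0)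

/-- The hierarchical graph `H_{n,k}` on the vertex set `(Z_n)^k`, whose adjacency
is given exactly by the three rules above. -/
def hierGraph (n k : ℕ) : SimpleGraph (Fin k → ZMod n) :=
  SimpleGraph.fromRel (fun x y => rule1 x y ∨ rule2 x y ∨ rule3 x y)

/-- The root vertex `00…0` of `H_{n,k}`. -/
def hierRoot (n k : ℕ) : Fin k → ZMod n := fun _ => 0

/-- The set of peripheral vertices of `H_{n,k}`: those all of whose coordinates
are nonzero. -/
def peripheral (n k : ℕ) : Set (Fin k → ZMod n) := {v | ∀ j, v j ≠ 0}

/-- The minimum graph distance from a vertex to a set of vertices. -/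
noncomputable def distToSet {V : Type*} (G : SimpleGraph V) (v : V) (S : Set V) : ℕ :=
  sInf (G.dist v '' S)

/-- The eccentricity of a vertex: the maximum graph distance from it to any vertex. -/
noncomputable def eccentricity {V : Type*} (G : SimpleGraph V) (v : V) : ℕ :=
  sSup (Set.range (G.dist v))

/-- The radius of a graph: the minimum eccentricity over all vertices. -/
noncomputable def graphRadius {V : Type*} (G : SimpleGraph V) : ℕ :=
  sInf (Set.range (eccentricity G))

/-- The degree of a vertex, as the number of its neighbors. -/
noncomputable def vdeg {V : Type*} (G : SimpleGraph V) (v : V) : ℕ :=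
  (G.neighborSet v).ncard

/-- `ε_v`: the number of edges of the graph both of whose endpoints are
neighbors of `v`. -/
noncomputable def localEdges {V : Type*} (G : SimpleGraph V) (v : V) : ℕ :=
  {e : Sym2 V | e ∈ G.edgeSet ∧ ∀ w ∈ e, G.Adj v w}.ncard

/-- The clustering coefficient `c(v) = 2 ε_v / (δ_v (δ_v - 1))` of a vertex `v`. -/
noncomputable def clustering {V : Type*} (G : SimpleGraph V) (v : V) : ℚ :=
  (2 * (localEdges G v : ℚ)) / ((vdeg G v : ℚ) * ((vdeg G v : ℚ) - 1))

/-- The vertex `z^{01} = 0101…` (1-indexed: 0 at odd positions, 1 at even). -/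
def z01 (n k : ℕ) : Fin k → ZMod n := fun j => if (j : ℕ) % 2 = 0 then 0 else 1

/-- The vertex `z^{10} = 1010…` (1-indexed: 1 at odd positions, 0 at even). -/
def z10 (n k : ℕ) : Fin k → ZMod n := fun j => if (j : ℕ) % 2 = 0 then 1 else 0

/-- The relation whose symmetric irreflexive closure is the adjacency of `hierGraph`. -/
def hierRel {n k : ℕ} (x y : Fin k → ZMod n) : Prop :=
  rule1 x y ∨ rule2 x y ∨ rule3 x y

lemma hierGraph_adj_iff {n k : ℕ} (x y : Fin k → ZMod n) :
    (hierGraph n k).Adj x y ↔ x ≠ y ∧ (hierRel x y ∨ hierRel y x) :=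
  SimpleGraph.fromRel_adj _ _ _

lemma hierRel_cons_same {n m : ℕ} (a : ZMod n) (x y : Fin m → ZMod n) :
    hierRel (Fin.cons a x : Fin (m + 1) → ZMod n) (Fin.cons a y) ↔ hierRel x y := by
  unfold hierRel
  refine or_congr ?_ (or_congr ?_ ?_)
  · simp [rule1, Fin.forall_fin_succ]
  · constructor
    · rintro ⟨i, hi, h1, h2, h3⟩
      rcases i with _ | i
      · -- The leading coordinate `a` would have to be both zero and nonzero.
        exact absurd (h2 0 le_rfl) (h3 0 le_rfl)
      · simp only [Fin.forall_fin_succ, Fin.cons_succ, Fin.val_succ, Nat.add_lt_add_iff_right,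
          Nat.add_le_add_iff_right] at h1 h2 h3
        exact ⟨i, by omega, h1.2, h2.2, h3.2⟩
    · rintro ⟨i, hi, h1, h2, h3⟩
      refine ⟨i + 1, by omega, ?_, ?_, ?_⟩ <;> simpa [Fin.forall_fin_succ]
  · constructor
    · rintro ⟨p, hp, h1, h2, h3, h4, h5⟩
      induction p using Fin.cases with
      | zero => exact absurd rfl h4
      | succ p =>
        simp only [Fin.forall_fin_succ, Fin.cons_succ, Fin.val_succ,
          Fin.succ_lt_succ_iff] at hp h1 h2 h3 h4 h5
        exact ⟨p, by omega, h1.2, h2, h3, h4, h5.2⟩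
    · rintro ⟨p, hp, h1, h2, h3, h4, h5⟩
      refine ⟨p.succ, by simp; omega, ?_, h2, h3, h4, ?_⟩
      · simpa [Fin.forall_fin_succ] using h1
      · simpa [Fin.forall_fin_succ] using h5

lemma hierRel_cons_ne {n m : ℕ} (hm : 1 ≤ m) {a b : ZMod n} (hab : a ≠ b)
    {x y : Fin m → ZMod n}
    (h : hierRel (Fin.cons a x : Fin (m + 1) → ZMod n) (Fin.cons b y)) :
    (a = 0 ∧ x = hierRoot n m ∧ b ≠ 0 ∧ y ∈ peripheral n m) ∨
      (a ≠ 0 ∧ b ≠ 0 ∧ x = hierRoot n m ∧ y = hierRoot n m) := by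
  rcases h with ⟨-, h⟩ | ⟨i, hi, h1, h2, h3⟩ | ⟨p, hp, h1, h2, h3, h4, h5⟩
  · exact absurd (h 0 (by simp; omega)) hab
  · rcases i with _ | i
    · exact Or.inl ⟨h2 0 le_rfl, funext fun j => h2 j.succ (Nat.zero_le _), h3 0 le_rfl,
        fun j => h3 j.succ (Nat.zero_le _)⟩
    · exact absurd (h1 0 (by simp)) hab
  · induction p using Fin.cases with
    | zero =>
      exact Or.inr ⟨h2, h3, funext fun j => (h5 j.succ (Fin.succ_pos j)).1,
        funext fun j => (h5 j.succ (Fin.succ_pos j)).2⟩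
    | succ p => exact absurd (h1 0 (Fin.succ_pos p)) hab

lemma hierGraph_adj_cons {n m : ℕ} (a : ZMod n) (x y : Fin m → ZMod n) :
    (hierGraph n (m + 1)).Adj (Fin.cons a x) (Fin.cons a y) ↔ (hierGraph n m).Adj x y := by
  rw [hierGraph_adj_iff, hierGraph_adj_iff, hierRel_cons_same, hierRel_cons_same]
  simp

lemma hierGraph_adj_root {n m : ℕ} (hm : 1 ≤ m) {y : Fin m → ZMod n}
    (hy : y ∈ peripheral n m) : (hierGraph n m).Adj (hierRoot n m) y := by
  have hne : hierRoot n m ≠ y := fun h => hy ⟨0, hm⟩ (congrFun h ⟨0, hm⟩).symm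
  refine (hierGraph_adj_iff _ _).2 ⟨hne, Or.inl ?_⟩
  -- Rule (2) requires at least two coordinates; `H_{n,1}` is complete by rule (1).
  rcases hm.eq_or_lt with rfl | hm
  · exact Or.inl ⟨hne, fun j hj => by omega⟩
  · exact Or.inr (Or.inl ⟨0, by omega, fun j hj => absurd hj (Nat.not_lt_zero _),
      fun j _ => rfl, fun j _ => hy j⟩)

/-- The retraction of `H_{n,m+1}` onto its block `α`, identified with `H_{n,m}`. The vertex `a x`
keeps its tail `x` when `a` and `α` are both zero or both nonzero, and is sent to the root
otherwise. -/
noncomputable def hierFold {n m : ℕ} (α : ZMod n) (v : Fin (m + 1) → ZMod n) : Fin m → ZMod n :=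
  open Classical in if (v 0 = 0 ↔ α = 0) then Fin.tail v else hierRoot n m

lemma hierFold_cons {n m : ℕ} (α : ZMod n) (x : Fin m → ZMod n) :
    hierFold α (Fin.cons α x) = x := by
  simp [hierFold]

lemma hierFold_of_hierRel {n m : ℕ} (hm : 1 ≤ m) (α : ZMod n) {a b : ZMod n}
    {x y : Fin m → ZMod n} (hab : a ≠ b)
    (h : hierRel (Fin.cons a x : Fin (m + 1) → ZMod n) (Fin.cons b y)) :
    hierFold α (Fin.cons a x) = hierFold α (Fin.cons b y) ∨
      (hierGraph n m).Adj (hierFold α (Fin.cons a x)) (hierFold α (Fin.cons b y)) := by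
  rcases hierRel_cons_ne hm hab h with ⟨ha, rfl, hb, hy⟩ | ⟨ha, hb, rfl, rfl⟩
  · by_cases hα : α = 0
    · left; simp [hierFold, ha, hb, hα]
    · right; simpa [hierFold, ha, hb, hα] using hierGraph_adj_root hm hy
  · left; simp [hierFold, ha, hb]

lemma hierFold_adj {n m : ℕ} (hm : 1 ≤ m) (α : ZMod n) {u v : Fin (m + 1) → ZMod n}
    (h : (hierGraph n (m + 1)).Adj u v) :
    hierFold α u = hierFold α v ∨ (hierGraph n m).Adj (hierFold α u) (hierFold α v) := by
  obtain ⟨a, x, rfl⟩ : ∃ a x, u = Fin.cons a x := ⟨u 0, Fin.tail u, (Fin.cons_self_tail u).symm⟩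
  obtain ⟨b, y, rfl⟩ : ∃ b y, v = Fin.cons b y := ⟨v 0, Fin.tail v, (Fin.cons_self_tail v).symm⟩
  by_cases hab : a = b
  · subst hab
    rw [hierGraph_adj_cons] at h
    by_cases ha : (a = 0 ↔ α = 0)
    · right; simpa [hierFold, ha] using h
    · left; simp [hierFold, ha]
  · rcases ((hierGraph_adj_iff _ _).1 h).2 with h | h
    · exact hierFold_of_hierRel hm α hab h
    · exact (hierFold_of_hierRel hm α (Ne.symm hab) h).imp Eq.symm SimpleGraph.Adj.symm

/-- A map sending each edge to an edge or to a single vertex sends walks to walks that are no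
longer. -/
lemma exists_walk_of_weakHom {V W : Type*} {G : SimpleGraph V} {H : SimpleGraph W} (f : V → W)
    (hf : ∀ u v, G.Adj u v → f u = f v ∨ H.Adj (f u) (f v)) {u v : V} (p : G.Walk u v) :
    ∃ q : H.Walk (f u) (f v), q.length ≤ p.length := by
  induction p with
  | nil => exact ⟨.nil, le_rfl⟩
  | @cons u v w h p ih =>
    obtain ⟨q, hq⟩ := ih
    rcases hf u v h with he | ha
    · exact ⟨q.copy he.symm rfl, by simp; omega⟩
    · exact ⟨.cons ha q, by simpa using hq⟩

lemma exists_walk_fold {n m : ℕ} (hm : 1 ≤ m) (α : ZMod n) {x y : Fin m → ZMod n}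
    (p : (hierGraph n (m + 1)).Walk (Fin.cons α x) (Fin.cons α y)) :
    ∃ q : (hierGraph n m).Walk x y, q.length ≤ p.length := by
  obtain ⟨q, hq⟩ := exists_walk_of_weakHom (hierFold α) (fun _ _ => hierFold_adj hm α) p
  exact ⟨q.copy (hierFold_cons α x) (hierFold_cons α y), by simpa using hq⟩

/-- for `k = m + 1 > 1`, two vertices with the same first
coordinate `α` are at the same distance in `H_{n,m+1}` as their tails in `H_{n,m}`. -/
theorem hierGraph_dist_same_block (n m : ℕ) (hn : 2 ≤ n) (hm : 1 ≤ m)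
    (α : ZMod n) (x' y' : Fin m → ZMod n) :
    (hierGraph n (m + 1)).dist (Fin.cons α x') (Fin.cons α y') =
      (hierGraph n m).dist x' y' := by
  have up {x y : Fin m → ZMod n} (p : (hierGraph n m).Walk x y) :=
    exists_walk_of_weakHom (H := hierGraph n (m + 1))
      (fun x => (Fin.cons α x : Fin (m + 1) → ZMod n))
      (fun u v h => Or.inr ((hierGraph_adj_cons α u v).2 h)) p
  by_cases hr : (hierGraph n m).Reachable x' y'
  · obtain ⟨p, hp⟩ := hr.exists_walk_length_eq_dist
    obtain ⟨q, hq⟩ := up p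
    obtain ⟨r, hr⟩ := q.reachable.exists_walk_length_eq_dist
    obtain ⟨s, hs⟩ := exists_walk_fold hm α r
    have h1 := SimpleGraph.dist_le q
    have h2 := SimpleGraph.dist_le s
    omega
  · -- Between vertices that are not reachable from one another, `dist` is `0` by convention.
    rw [SimpleGraph.dist_eq_zero_of_not_reachable hr, SimpleGraph.dist_eq_zero_of_not_reachable]
    rintro ⟨p⟩
    exact hr (exists_walk_fold hm α p).choose.reachable
end

section
/- Let k > 1 and let x = αx′ and y = βy′ be two vertices of the hierarchical graph H_{n,k}, where α, β ∈ Z_n with α ≠ 0, β ≠ 0 and α ≠ β, and x′, y′ ∈ Z_n^{k−1}. Then the graph distance between x and y in H_{n,k} equals min{ ∂_{k−1}(x′, P) + 2 + ∂_{k−1}(y′, P), ∂_{k−1}(x′, r) + 1 + ∂_{k−1}(r, y′) }, where ∂_{k−1} denotes graph distance in H_{n,k−1}, r is the all-zeros vertex of H_{n,k−1}, P is the set of vertices of H_{n,k−1} all of whose coordinates are nonzero, and ∂_{k−1}(v, S) denotes the minimum over u ∈ S of ∂_{k−1}(v, u). -/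
lemma hier_adj_cases {n m : ℕ} (hm : 1 ≤ m) {a b : ZMod n} {u v : Fin m → ZMod n}
    (h : (hierGraph n (m + 1)).Adj (Fin.cons a u) (Fin.cons b v)) :
    (a = b ∧ (hierGraph n m).Adj u v) ∨
    (a = 0 ∧ b ≠ 0 ∧ u = hierRoot n m ∧ v ∈ peripheral n m) ∨
    (b = 0 ∧ a ≠ 0 ∧ v = hierRoot n m ∧ u ∈ peripheral n m) ∨
    (a ≠ 0 ∧ b ≠ 0 ∧ u = hierRoot n m ∧ v = hierRoot n m) := by
  have key : ∀ {a b : ZMod n} {u v : Fin m → ZMod n},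
      (Fin.cons a u : Fin (m + 1) → ZMod n) ≠ Fin.cons b v →
      (rule1 (Fin.cons a u : Fin (m + 1) → ZMod n) (Fin.cons b v) ∨
        rule2 (Fin.cons a u : Fin (m + 1) → ZMod n) (Fin.cons b v) ∨
        rule3 (Fin.cons a u : Fin (m + 1) → ZMod n) (Fin.cons b v)) →
      (a = b ∧ (hierGraph n m).Adj u v) ∨
      (a = 0 ∧ b ≠ 0 ∧ u = hierRoot n m ∧ v ∈ peripheral n m) ∨
      (a ≠ 0 ∧ b ≠ 0 ∧ u = hierRoot n m ∧ v = hierRoot n m) := by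
    intro a b u v hne h
    have hne' : a = b → u ≠ v := by
      rintro rfl rfl; exact hne rfl
    rcases h with ⟨-, h⟩ | ⟨i, hi, h1, h2, h3⟩ | ⟨p, hp, h1, h2, h3, h4, h5⟩
    · have hab : a = b := h 0 (by simp; omega)
      refine Or.inl ⟨hab, SimpleGraph.fromRel_adj _ _ _ |>.2 ⟨hne' hab, Or.inl (Or.inl
        ⟨hne' hab, fun j hj => ?_⟩)⟩⟩
      simpa using h j.succ (by simpa using hj)
    · rcases Nat.eq_zero_or_pos i with rfl | hpos
      · refine Or.inr (Or.inl ⟨h2 0 (by simp), h3 0 (by simp), funext fun j => ?_, fun j => ?_⟩)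
        · simpa [hierRoot] using h2 j.succ (by simp)
        · simpa using h3 j.succ (by simp)
      · have hab : a = b := h1 0 (by simpa using hpos)
        refine Or.inl ⟨hab, SimpleGraph.fromRel_adj _ _ _ |>.2 ⟨hne' hab, Or.inl (Or.inr (Or.inl
          ⟨i - 1, by omega, fun j hj => ?_, fun j hj => ?_, fun j hj => ?_⟩))⟩⟩
        · simpa using h1 j.succ (by simp; omega)
        · simpa using h2 j.succ (by simp; omega)
        · simpa using h3 j.succ (by simp; omega)
    · induction p using Fin.cases with
      | zero =>
        refine Or.inr (Or.inr ⟨h2, h3, funext fun j => ?_, funext fun j => ?_⟩)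
        · simpa [hierRoot] using (h5 j.succ (Fin.succ_pos j)).1
        · simpa [hierRoot] using (h5 j.succ (Fin.succ_pos j)).2
      | succ p =>
        have hab : a = b := h1 0 (Fin.succ_pos p)
        refine Or.inl ⟨hab, SimpleGraph.fromRel_adj _ _ _ |>.2 ⟨hne' hab, Or.inl (Or.inr (Or.inr
          ⟨p, by simp at hp; omega, fun j hj => ?_, by simpa using h2, by simpa using h3,
            by simpa using h4, fun j hj => ?_⟩))⟩⟩
        · simpa using h1 j.succ (by simpa using hj)
        · simpa using h5 j.succ (by simpa using hj)
  obtain ⟨hne, h | h⟩ := (SimpleGraph.fromRel_adj _ _ _).1 h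
  · rcases key hne h with h | h | h
    · exact Or.inl h
    · exact Or.inr (Or.inl h)
    · exact Or.inr (Or.inr (Or.inr h))
  · rcases key hne.symm h with ⟨h, h'⟩ | h | ⟨h1, h2, h3, h4⟩
    · exact Or.inl ⟨h.symm, h'.symm⟩
    · exact Or.inr (Or.inr (Or.inl h))
    · exact Or.inr (Or.inr (Or.inr ⟨h2, h1, h4, h3⟩))

/-- The inclusion `u ↦ γu` of `H_{n,m}` into `H_{n,m+1}` as one of its `n` copies. -/
def consHom (n m : ℕ) (a : ZMod n) : hierGraph n m →g hierGraph n (m + 1) where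
  toFun u := Fin.cons a u
  map_rel' := by
    have key : ∀ {u v : Fin m → ZMod n}, u ≠ v → (rule1 u v ∨ rule2 u v ∨ rule3 u v) →
        (rule1 (Fin.cons a u : Fin (m + 1) → ZMod n) (Fin.cons a v) ∨
        rule2 (Fin.cons a u : Fin (m + 1) → ZMod n) (Fin.cons a v) ∨
        rule3 (Fin.cons a u : Fin (m + 1) → ZMod n) (Fin.cons a v)) := by
      rintro u v hne (⟨-, h⟩ | ⟨i, hi, h1, h2, h3⟩ | ⟨p, hp, h1, h2, h3, h4, h5⟩)
      · refine Or.inl ⟨fun h => hne (funext fun j => by simpa using congrFun h j.succ), fun j => ?_⟩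
        induction j using Fin.cases with
        | zero => simp
        | succ j => simpa using h j
      · refine Or.inr (Or.inl ⟨i + 1, by omega, fun j => ?_, fun j => ?_, fun j => ?_⟩)
        all_goals induction j using Fin.cases with
          | zero => simp
          | succ j => first | simpa using h1 j | simpa using h2 j | simpa using h3 j
      · refine Or.inr (Or.inr ⟨p.succ, by simp; omega, fun j => ?_, by simpa using h2,
          by simpa using h3, by simpa using h4, fun j => ?_⟩)
        all_goals induction j using Fin.cases with
          | zero => simp
          | succ j => first | simpa using h1 j | simpa using h5 j
    intro u v h
    obtain ⟨hne, h⟩ := (SimpleGraph.fromRel_adj _ _ _).1 h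
    refine (SimpleGraph.fromRel_adj _ _ _).2
      ⟨fun h => hne (funext fun j => by simpa using congrFun h j.succ), ?_⟩
    exact h.imp (key hne) (key hne.symm)

lemma adj_zero_root {n m : ℕ} (hm : 1 ≤ m) {b : ZMod n} (hb : b ≠ 0) {p : Fin m → ZMod n}
    (hp : p ∈ peripheral n m) :
    (hierGraph n (m + 1)).Adj (Fin.cons 0 (hierRoot n m)) (Fin.cons b p) := by
  refine (SimpleGraph.fromRel_adj _ _ _).2 ⟨fun h => hb (congrFun h 0).symm,
    Or.inl (Or.inr (Or.inl ⟨0, by omega, by simp, fun j _ => ?_, fun j _ => ?_⟩))⟩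
  · induction j using Fin.cases with
    | zero => simp
    | succ j => simp [hierRoot]
  · induction j using Fin.cases with
    | zero => simpa
    | succ j => simpa using hp j

lemma adj_root_root {n m : ℕ} (hm : 1 ≤ m) {a b : ZMod n} (ha : a ≠ 0) (hb : b ≠ 0)
    (hab : a ≠ b) :
    (hierGraph n (m + 1)).Adj (Fin.cons a (hierRoot n m)) (Fin.cons b (hierRoot n m)) := by
  refine (SimpleGraph.fromRel_adj _ _ _).2 ⟨fun h => hab (congrFun h 0),
    Or.inl (Or.inr (Or.inr ⟨0, by simp; omega, by simp, ha, hb, hab, fun j hj => ?_⟩))⟩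
  induction j using Fin.cases with
  | zero => simp at hj
  | succ j => simp [hierRoot]

lemma ones_mem_peripheral {n : ℕ} (hn : 2 ≤ n) (m : ℕ) : (fun _ => 1) ∈ peripheral n m := by
  intro j
  have : Fact (1 < n) := ⟨hn⟩
  exact one_ne_zero

lemma hierGraph_connected {n : ℕ} (hn : 2 ≤ n) (m : ℕ) : (hierGraph n m).Connected := by
  suffices h : ∀ u, (hierGraph n m).Reachable u (hierRoot n m) from
    { preconnected := fun u v => (h u).trans (h v).symm, nonempty := ⟨hierRoot n m⟩ }
  induction m with
  | zero => intro u; rw [Subsingleton.elim u]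
  | succ m ih =>
    intro x
    have hroot : hierRoot n (m + 1) = Fin.cons 0 (hierRoot n m) := by
      funext j
      induction j using Fin.cases <;> simp [hierRoot]
    obtain ⟨a, u, rfl⟩ : ∃ (a : ZMod n) (u : Fin m → ZMod n), x = Fin.cons a u :=
      ⟨x 0, Fin.tail x, (Fin.cons_self_tail x).symm⟩
    rw [hroot]
    by_cases hm : 1 ≤ m
    · have hcopy : ∀ v w : Fin m → ZMod n,
          (hierGraph n (m + 1)).Reachable (Fin.cons a v) (Fin.cons a w) := fun v w =>
        ((ih v).trans (ih w).symm).map (consHom n m a)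
      by_cases ha : a = 0
      · subst ha; exact hcopy _ _
      · exact (hcopy u _).trans
          (adj_zero_root hm ha (ones_mem_peripheral hn m)).symm.reachable
    · obtain rfl : m = 0 := by omega
      by_cases he : (Fin.cons a u : Fin 1 → ZMod n) = Fin.cons 0 (hierRoot n 0)
      · rw [he]
      · exact SimpleGraph.Adj.reachable ((SimpleGraph.fromRel_adj _ _ _).2
          ⟨he, Or.inl (Or.inl ⟨he, fun j hj => by omega⟩)⟩)

lemma dist_root_peripheral_le {n m : ℕ} {p : Fin m → ZMod n} (hp : p ∈ peripheral n m) :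
    (hierGraph n m).dist (hierRoot n m) p ≤ 1 := by
  by_cases he : hierRoot n m = p
  · simp [he]
  · suffices h : (hierGraph n m).Adj (hierRoot n m) p from
      (SimpleGraph.dist_eq_one_iff_adj.2 h).le
    refine (SimpleGraph.fromRel_adj _ _ _).2 ⟨he, Or.inl ?_⟩
    by_cases hm : 2 ≤ m
    · exact Or.inr (Or.inl ⟨0, by omega, by simp, fun _ _ => rfl, fun j _ => hp j⟩)
    · exact Or.inl ⟨he, fun j hj => by omega⟩

lemma distToSet_le {n m : ℕ} (v : Fin m → ZMod n) {p : Fin m → ZMod n}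
    (hp : p ∈ peripheral n m) :
    distToSet (hierGraph n m) v (peripheral n m) ≤ (hierGraph n m).dist v p :=
  Nat.sInf_le ⟨p, hp, rfl⟩

lemma exists_distToSet {n : ℕ} (hn : 2 ≤ n) {m : ℕ} (v : Fin m → ZMod n) :
    ∃ p ∈ peripheral n m,
      (hierGraph n m).dist v p = distToSet (hierGraph n m) v (peripheral n m) :=
  Nat.sInf_mem (Set.Nonempty.image _ ⟨_, ones_mem_peripheral hn m⟩)

lemma dist_cons_le {n : ℕ} (hn : 2 ≤ n) {m : ℕ} (a : ZMod n) (u v : Fin m → ZMod n) :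
    (hierGraph n (m + 1)).dist (Fin.cons a u) (Fin.cons a v) ≤ (hierGraph n m).dist u v := by
  obtain ⟨w, hw⟩ := (hierGraph_connected hn m).exists_walk_length_eq_dist u v
  rw [← hw, ← SimpleGraph.Walk.length_map (consHom n m a) w]
  exact SimpleGraph.dist_le _

open Classical in
/-- The distance from `αx'` to `γv` in `H_{n,m+1}`, written in terms of distances in `H_{n,m}`,
as a function of the leading coordinate `γ` and the remaining coordinates `v`. -/
noncomputable def potential {n m : ℕ} (α : ZMod n) (x' : Fin m → ZMod n) (γ : ZMod n)
    (v : Fin m → ZMod n) : ℕ :=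
  if γ = α then (hierGraph n m).dist x' v
  else if γ = 0 then
    distToSet (hierGraph n m) x' (peripheral n m) + 1 + (hierGraph n m).dist (hierRoot n m) v
  else min (distToSet (hierGraph n m) x' (peripheral n m) + 2 +
      distToSet (hierGraph n m) v (peripheral n m))
    ((hierGraph n m).dist x' (hierRoot n m) + 1 + (hierGraph n m).dist (hierRoot n m) v)

lemma potential_le {n m : ℕ} (hn : 2 ≤ n) (hm : 1 ≤ m) {α : ZMod n} (hα : α ≠ 0)
    (x' : Fin m → ZMod n) {a b : ZMod n} {u v : Fin m → ZMod n}
    (h : (hierGraph n (m + 1)).Adj (Fin.cons a u) (Fin.cons b v)) :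
    potential α x' b v ≤ potential α x' a u + 1 := by
  have hc := hierGraph_connected hn m
  have htri := fun u v w => hc.dist_triangle (u := u) (v := v) (w := w)
  -- The distances of `x'` to the root and to the periphery differ by at most one.
  have h1 : (hierGraph n m).dist x' (hierRoot n m) ≤
      distToSet (hierGraph n m) x' (peripheral n m) + 1 := by
    obtain ⟨p, hp, hpd⟩ := exists_distToSet hn x'
    have := htri x' p (hierRoot n m)
    have h2 := dist_root_peripheral_le hp
    rw [SimpleGraph.dist_comm] at h2
    omega
  have h2 : distToSet (hierGraph n m) x' (peripheral n m) ≤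
      (hierGraph n m).dist x' (hierRoot n m) + 1 := by
    have hp := ones_mem_peripheral hn m
    have := htri x' (hierRoot n m) (fun _ => 1)
    have h2 := dist_root_peripheral_le hp
    have := distToSet_le x' hp
    omega
  rcases hier_adj_cases hm h with ⟨rfl, hadj⟩ | ⟨rfl, hb, rfl, hv⟩ | ⟨rfl, ha, rfl, hu⟩ |
    ⟨ha, hb, rfl, rfl⟩
  · have huv : (hierGraph n m).dist u v = 1 := SimpleGraph.dist_eq_one_iff_adj.2 hadj
    have e1 := htri x' u v
    have e2 := htri (hierRoot n m) u v
    have e3 : distToSet (hierGraph n m) v (peripheral n m) ≤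
        distToSet (hierGraph n m) u (peripheral n m) + 1 := by
      obtain ⟨p, hp, hpd⟩ := exists_distToSet hn u
      have := htri v u p
      have := distToSet_le v hp
      have hvu : (hierGraph n m).dist v u = 1 := SimpleGraph.dist_eq_one_iff_adj.2 hadj.symm
      omega
    unfold potential
    split_ifs <;> omega
  · have e1 := htri x' (hierRoot n m) v
    have e2 := dist_root_peripheral_le hv
    have e3 := distToSet_le v hv
    rw [SimpleGraph.dist_self] at e3
    unfold potential
    rw [if_neg hα.symm, if_pos rfl, if_neg hb, SimpleGraph.dist_self]
    split_ifs <;> omega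
  · have e3 := distToSet_le x' hu
    unfold potential
    rw [if_neg hα.symm, if_pos rfl, if_neg ha, SimpleGraph.dist_self]
    split_ifs <;> omega
  · unfold potential
    rw [if_neg ha, if_neg hb, SimpleGraph.dist_self]
    split_ifs <;> omega

lemma potential_le_dist {n m : ℕ} (hn : 2 ≤ n) (hm : 1 ≤ m) {α : ZMod n} (hα : α ≠ 0)
    (x' : Fin m → ZMod n) (b : ZMod n) (v : Fin m → ZMod n) :
    potential α x' b v ≤ (hierGraph n (m + 1)).dist (Fin.cons α x') (Fin.cons b v) := by
  have key : ∀ {s t : Fin (m + 1) → ZMod n} (w : (hierGraph n (m + 1)).Walk s t),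
      potential α x' (t 0) (Fin.tail t) ≤ potential α x' (s 0) (Fin.tail s) + w.length := by
    intro s t w
    induction w with
    | nil => simp
    | @cons s s' t h w ih =>
      rw [← Fin.cons_self_tail s, ← Fin.cons_self_tail s'] at h
      have := potential_le hn hm hα x' h
      rw [SimpleGraph.Walk.length_cons]
      omega
  obtain ⟨w, hw⟩ := (hierGraph_connected hn (m + 1)).exists_walk_length_eq_dist
    (Fin.cons α x') (Fin.cons b v)
  have := key w
  have h0 : potential α x' α x' = 0 := by simp [potential]
  simp only [Fin.cons_zero, Fin.tail_cons, h0] at this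
  omega

/-- for `k = m + 1 > 1`, if `x = αx'` and `y = βy'` with
`α, β ≠ 0`, `α ≠ β`, then
`∂_k(x,y) = min { ∂_{k-1}(x',P) + 2 + ∂_{k-1}(y',P), ∂_{k-1}(x',r) + 1 + ∂_{k-1}(r,y') }`. -/
theorem hierGraph_dist_two_nonzero_blocks (n m : ℕ) (hn : 2 ≤ n) (hm : 1 ≤ m)
    (α β : ZMod n) (hα : α ≠ 0) (hβ : β ≠ 0) (hαβ : α ≠ β)
    (x' y' : Fin m → ZMod n) :
    (hierGraph n (m + 1)).dist (Fin.cons α x') (Fin.cons β y') =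
      min (distToSet (hierGraph n m) x' (peripheral n m) + 2 +
            distToSet (hierGraph n m) y' (peripheral n m))
          ((hierGraph n m).dist x' (hierRoot n m) + 1 +
            (hierGraph n m).dist (hierRoot n m) y') := by
  apply le_antisymm
  · have htri := fun u v w =>
      (hierGraph_connected hn (m + 1)).dist_triangle (u := u) (v := v) (w := w)
    refine le_min ?_ ?_
    · obtain ⟨p, hp, hpd⟩ := exists_distToSet hn x'
      obtain ⟨q, hq, hqd⟩ := exists_distToSet hn y'
      have e1 := dist_cons_le hn α x' p
      have e2 := dist_cons_le hn β q y'
      have e3 := SimpleGraph.dist_eq_one_iff_adj.2 (adj_zero_root hm hα hp).symm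
      have e4 := SimpleGraph.dist_eq_one_iff_adj.2 (adj_zero_root hm hβ hq)
      have t1 := htri (Fin.cons α x') (Fin.cons α p) (Fin.cons β y')
      have t2 := htri (Fin.cons α p) (Fin.cons 0 (hierRoot n m)) (Fin.cons β y')
      have t3 := htri (Fin.cons 0 (hierRoot n m)) (Fin.cons β q) (Fin.cons β y')
      rw [SimpleGraph.dist_comm] at hqd
      omega
    · have e1 := dist_cons_le hn α x' (hierRoot n m)
      have e2 := dist_cons_le hn β (hierRoot n m) y'
      have e3 := SimpleGraph.dist_eq_one_iff_adj.2 (adj_root_root hm hα hβ hαβ)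
      have t1 := htri (Fin.cons α x') (Fin.cons α (hierRoot n m)) (Fin.cons β y')
      have t2 := htri (Fin.cons α (hierRoot n m)) (Fin.cons β (hierRoot n m)) (Fin.cons β y')
      omega
  · have := potential_le_dist hn hm hα x' β y'
    rwa [potential, if_neg hαβ.symm, if_neg hβ] at this
end
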